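/- arXiv:math/0703142 — 4 statements merged into one kernel-verified Lean document; each statement's English description precedes it below -/
import Mathlib

section
/- Every ordered pair of orthogonal Latin squares of order 4 is ∼'-equivalent to the pair (L₁, L₂); hence the set of ∼'-equivalence classes of ordered pairs of orthogonal Latin squares of order 4 has exactly one element. -/
/-- A Latin square of order `k` (rows, columns and symbols drawn from the same
`k`-element type, e.g. `Fin k` or `ZMod k`): every row and every column is a
bijection. -/
def IsLatinSquare {α : Type*} (L : α → α → α) : Prop :=
  (∀ i, Function.Bijective fun j => L i j) ∧ (∀ j, Function.Bijective fun i => L i j)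

/-- Two squares are orthogonal if `(i, j) ↦ (L i j, L' i j)` is a bijection. -/
def IsOrthogonal {α : Type*} (L L' : α → α → α) : Prop :=
  Function.Bijective fun p : α × α => (L p.1 p.2, L' p.1 p.2)

/-- The relation `∼` on Latin squares: `L ∼ L'` iff `L'` is obtained from `L` by
permuting rows, permuting columns and relabelling symbols. -/
def LatinEquiv {α : Type*} (L L' : α → α → α) : Prop :=
  ∃ a b c : Equiv.Perm α, ∀ i j, L' i j = c (L (a i) (b j))

/-- One elementary move on an ordered pair of squares: simultaneous row
permutation, simultaneous column permutation, relabelling the symbols of either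
square, transposing either square, or interchanging the squares. -/
inductive PairStep {α : Type*} :
    ((α → α → α) × (α → α → α)) → ((α → α → α) × (α → α → α)) → Prop
  | rows (P : (α → α → α) × (α → α → α)) (a : Equiv.Perm α) :
      PairStep P (fun i j => P.1 (a i) j, fun i j => P.2 (a i) j)
  | cols (P : (α → α → α) × (α → α → α)) (b : Equiv.Perm α) :
      PairStep P (fun i j => P.1 i (b j), fun i j => P.2 i (b j))
  | relabelFst (P : (α → α → α) × (α → α → α)) (c : Equiv.Perm α) :
      PairStep P (fun i j => c (P.1 i j), P.2)
  | relabelSnd (P : (α → α → α) × (α → α → α)) (c : Equiv.Perm α) :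
      PairStep P (P.1, fun i j => c (P.2 i j))
  | transposeFst (P : (α → α → α) × (α → α → α)) :
      PairStep P (fun i j => P.1 j i, P.2)
  | transposeSnd (P : (α → α → α) × (α → α → α)) :
      PairStep P (P.1, fun i j => P.2 j i)
  | swap (P : (α → α → α) × (α → α → α)) :
      PairStep P (P.2, P.1)

/-- The equivalence relation `∼'` on ordered pairs of squares, generated by the
elementary moves `PairStep`. -/
def PairEquiv {α : Type*} (P Q : (α → α → α) × (α → α → α)) : Prop :=
  Relation.EqvGen PairStep P Q

/-- The cyclic square `C_c` on `ZMod k`: `C_c i j = j + c * i`. -/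
def Csq (k : ℕ) (c : ZMod k) : ZMod k → ZMod k → ZMod k :=
  fun i j => j + c * i

/-- Ordered pairs of orthogonal Latin squares of order `k`. -/
def OLSPair (k : ℕ) :=
  {P : (Fin k → Fin k → Fin k) × (Fin k → Fin k → Fin k) //
    IsLatinSquare P.1 ∧ IsLatinSquare P.2 ∧ IsOrthogonal P.1 P.2}

/-- `∼'` as a setoid on ordered pairs of orthogonal Latin squares. -/
def olsSetoid (k : ℕ) : Setoid (OLSPair k) where
  r P Q := PairEquiv P.val Q.val
  iseqv := ⟨fun _ => Relation.EqvGen.refl _,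
            fun h => Relation.EqvGen.symm _ _ h,
            fun h h' => Relation.EqvGen.trans _ _ _ h h'⟩

/-- A transversal of a square: a permutation `f` of the columns such that
`i ↦ L i (f i)` is injective (hits every symbol exactly once). -/
def IsTransversal {α : Type*} (L : α → α → α) (f : Equiv.Perm α) : Prop :=
  Function.Injective fun i => L i (f i)

/-- `L` admits `k` pairwise disjoint transversals. -/
def HasDisjointTransversals {k : ℕ} (L : Fin k → Fin k → Fin k) : Prop :=
  ∃ T : Fin k → Equiv.Perm (Fin k), (∀ m, IsTransversal L (T m)) ∧
    ∀ m m', m ≠ m' → ∀ i, T m i ≠ T m' i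

/-- `G'_k`: Latin squares whose successive-row permutations `σ_{i,i+1}` all
equal one common permutation which is a single `k`-cycle. -/
def GPrime (k : ℕ) : Set (Fin k → Fin k → Fin k) :=
  {L | IsLatinSquare L ∧ ∃ σ : Equiv.Perm (Fin k), σ.IsCycle ∧ σ.support.card = k ∧
    ∀ (i : ℕ) (h : i + 1 < k) (p : Fin k),
      σ (L ⟨i, Nat.lt_of_succ_lt h⟩ p) = L ⟨i + 1, h⟩ p}

/-- `G_k`: Latin squares `∼`-equivalent to an element of `G'_k`. -/
def GSet (k : ℕ) : Set (Fin k → Fin k → Fin k) :=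
  {L | ∃ H ∈ GPrime k, LatinEquiv L H}

/-- The cyclic square `C_1`, written on `Fin k` via the identification of
`ZMod k` with `Fin k`: `C_1 i j = j + i (mod k)`. -/
def C1fin (k : ℕ) : Fin k → Fin k → Fin k :=
  fun i j => ⟨(j.1 + i.1) % k, Nat.mod_lt _ i.pos⟩

/-- The square `L₁` with rows (1,2,3,4),(2,1,4,3),(3,4,1,2),(4,3,2,1),
written on `Fin 4` via the identification `s ↦ s - 1` of {1,2,3,4} with Fin 4. -/
def L₁ : Fin 4 → Fin 4 → Fin 4 :=
  ![![0,1,2,3], ![1,0,3,2], ![2,3,0,1], ![3,2,1,0]]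

/-- The square `L₂` with rows (1,2,3,4),(4,3,2,1),(2,1,4,3),(3,4,1,2). -/
def L₂ : Fin 4 → Fin 4 → Fin 4 :=
  ![![0,1,2,3], ![3,2,1,0], ![1,0,3,2], ![2,3,0,1]]

/-- The square `L₃` with rows (1,2,3,4),(3,4,1,2),(4,3,2,1),(2,1,4,3). -/
def L₃ : Fin 4 → Fin 4 → Fin 4 :=
  ![![0,1,2,3], ![2,3,0,1], ![3,2,1,0], ![1,0,3,2]]

/-- Two rows clash in no column. -/
abbrev RowDisj (r s : Fin 4 → Fin 4) : Prop := ∀ j, r j ≠ s j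

/-- No pair of symbols occurs both in the row pair `(r, s)` and in `(r', s')`. -/
abbrev RowOrth (r s r' s' : Fin 4 → Fin 4) : Prop := ∀ j k, r j = r' k → s j ≠ s' k

/-- A row has no repeated symbol. -/
abbrev RowInj (r : Fin 4 → Fin 4) : Prop := ∀ j k, r j = r k → j = k

set_option maxRecDepth 100000 in
set_option maxHeartbeats 0 in
set_option synthInstance.maxHeartbeats 0 in
set_option synthInstance.maxSize 10000 in
theorem key :
    ∀ r1 : Fin 4 → Fin 4, r1 0 = 1 → RowDisj id r1 → RowInj r1 →
    ∀ s1 : Fin 4 → Fin 4, RowDisj id s1 → RowInj s1 → RowOrth id id r1 s1 →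
    ∀ r2 : Fin 4 → Fin 4, r2 0 = 2 → RowDisj id r2 → RowDisj r1 r2 → RowInj r2 →
    ∀ s2 : Fin 4 → Fin 4, RowDisj id s2 → RowDisj s1 s2 → RowInj s2 →
      RowOrth id id r2 s2 → RowOrth r1 s1 r2 s2 →
    ∀ r3 : Fin 4 → Fin 4, r3 0 = 3 → RowDisj id r3 → RowDisj r1 r3 → RowDisj r2 r3 → RowInj r3 →
    ∀ s3 : Fin 4 → Fin 4, RowDisj id s3 → RowDisj s1 s3 → RowDisj s2 s3 → RowInj s3 →
      RowOrth id id r3 s3 → RowOrth r1 s1 r3 s3 → RowOrth r2 s2 r3 s3 →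
    (r1 = L₁ 1 ∧ r2 = L₁ 2 ∧ r3 = L₁ 3) ∧
      ((s1 = L₂ 1 ∧ s2 = L₂ 2 ∧ s3 = L₂ 3) ∨ (s1 = L₃ 1 ∧ s2 = L₃ 2 ∧ s3 = L₃ 3)) := by
  decide +kernel

theorem normalized (M N : Fin 4 → Fin 4 → Fin 4)
    (hM0 : M 0 = id) (hN0 : N 0 = id) (hc : ∀ i, M i 0 = i)
    (hMr : ∀ i j k, M i j = M i k → j = k) (hMc : ∀ i i' j, M i j = M i' j → i = i')
    (hNr : ∀ i j k, N i j = N i k → j = k) (hNc : ∀ i i' j, N i j = N i' j → i = i')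
    (ho : ∀ i i' j k, M i j = M i' k → N i j = N i' k → i = i') :
    M = L₁ ∧ (N = L₂ ∨ N = L₃) := by
  have dM : ∀ i i', i ≠ i' → RowDisj (M i) (M i') := fun i i' h j e => h (hMc i i' j e)
  have dN : ∀ i i', i ≠ i' → RowDisj (N i) (N i') := fun i i' h j e => h (hNc i i' j e)
  have dO : ∀ i i', i ≠ i' → RowOrth (M i) (N i) (M i') (N i') :=
    fun i i' h j k e e' => h (ho i i' j k e e')
  have dM0 : ∀ i, 0 ≠ i → RowDisj id (M i) := fun i h => hM0 ▸ dM 0 i h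
  have dN0 : ∀ i, 0 ≠ i → RowDisj id (N i) := fun i h => hN0 ▸ dN 0 i h
  have dO0 : ∀ i, 0 ≠ i → RowOrth id id (M i) (N i) := fun i h => by
    have := dO 0 i h
    rwa [hM0, hN0] at this
  have K := key (M 1) (hc 1) (dM0 1 (by decide)) (hMr 1)
    (N 1) (dN0 1 (by decide)) (hNr 1) (dO0 1 (by decide))
    (M 2) (hc 2) (dM0 2 (by decide)) (dM 1 2 (by decide)) (hMr 2)
    (N 2) (dN0 2 (by decide)) (dN 1 2 (by decide)) (hNr 2) (dO0 2 (by decide)) (dO 1 2 (by decide))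
    (M 3) (hc 3) (dM0 3 (by decide)) (dM 1 3 (by decide)) (dM 2 3 (by decide)) (hMr 3)
    (N 3) (dN0 3 (by decide)) (dN 1 3 (by decide)) (dN 2 3 (by decide)) (hNr 3)
    (dO0 3 (by decide)) (dO 1 3 (by decide)) (dO 2 3 (by decide))
  have ext4 : ∀ A B : Fin 4 → Fin 4 → Fin 4, A 0 = B 0 → A 1 = B 1 → A 2 = B 2 → A 3 = B 3 →
      A = B := by
    intro A B h0 h1 h2 h3
    funext i
    fin_cases i <;> assumption
  have e1 : id = L₁ 0 := by decide
  have e2 : id = L₂ 0 := by decide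
  have e3 : id = L₃ 0 := by decide
  obtain ⟨⟨a, b, c⟩, h⟩ := K
  refine ⟨ext4 _ _ (hM0.trans e1) a b c, ?_⟩
  rcases h with ⟨a, b, c⟩ | ⟨a, b, c⟩
  · exact Or.inl (ext4 _ _ (hN0.trans e2) a b c)
  · exact Or.inr (ext4 _ _ (hN0.trans e3) a b c)

theorem L13_equiv : PairEquiv (L₁, L₃) (L₁, L₂) := by
  refine Relation.EqvGen.trans _ _ _ (Relation.EqvGen.rel _ _ (PairStep.swap _)) ?_
  let b : Equiv.Perm (Fin 4) := ⟨![0,3,1,2], ![0,2,3,1], by decide, by decide⟩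
  have h := PairStep.rows (L₃, L₁) b
  have e : ((fun i j => L₃ (b i) j, fun i j => L₁ (b i) j) :
      (Fin 4 → Fin 4 → Fin 4) × (Fin 4 → Fin 4 → Fin 4)) = (L₁, L₂) := by decide
  exact Relation.EqvGen.rel _ _ (e ▸ h)

theorem all_equiv (L L' : Fin 4 → Fin 4 → Fin 4)
    (hL : IsLatinSquare L) (hL' : IsLatinSquare L') (ho : IsOrthogonal L L') :
    PairEquiv (L, L') (L₁, L₂) := by
  let c : Equiv.Perm (Fin 4) := (Equiv.ofBijective _ (hL.1 0)).symm
  let c' : Equiv.Perm (Fin 4) := (Equiv.ofBijective _ (hL'.1 0)).symm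
  have hc : ∀ j, c (L 0 j) = j := fun j => Equiv.ofBijective_symm_apply_apply _ (hL.1 0) j
  have hc' : ∀ j, c' (L' 0 j) = j := fun j => Equiv.ofBijective_symm_apply_apply _ (hL'.1 0) j
  have hb : Function.Bijective fun i => c (L i 0) := c.bijective.comp (hL.2 0)
  let a : Equiv.Perm (Fin 4) := (Equiv.ofBijective _ hb).symm
  have ha : ∀ i, c (L (a i) 0) = i := fun i => Equiv.ofBijective_apply_symm_apply _ hb i
  have ha0 : a 0 = 0 := hb.1 (by simp only [ha, hc])
  have s1 := PairStep.relabelFst (L, L') c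
  have s2 := PairStep.relabelSnd (fun i j => c (L i j), L') c'
  have s3 := PairStep.rows (fun i j => c (L i j), fun i j => c' (L' i j)) a
  have s : PairEquiv (L, L') (fun i j => c (L (a i) j), fun i j => c' (L' (a i) j)) :=
    Relation.EqvGen.trans _ _ _ (Relation.EqvGen.rel _ _ s1)
      (Relation.EqvGen.trans _ _ _ (Relation.EqvGen.rel _ _ s2) (Relation.EqvGen.rel _ _ s3))
  have n := normalized (fun i j => c (L (a i) j)) (fun i j => c' (L' (a i) j))
    (by funext j; simp [ha0, hc]) (by funext j; simp [ha0, hc']) ha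
    (fun i j k h => (hL.1 (a i)).1 (c.injective h))
    (fun i i' j h => a.injective ((hL.2 j).1 (c.injective h)))
    (fun i j k h => (hL'.1 (a i)).1 (c'.injective h))
    (fun i i' j h => a.injective ((hL'.2 j).1 (c'.injective h)))
    (fun i i' j k h h' => by
      have := ho.1 (a₁ := (a i, j)) (a₂ := (a i', k)) (Prod.ext (c.injective h) (c'.injective h'))
      exact a.injective (congrArg Prod.fst this))
  rw [n.1] at s
  rcases n.2 with h | h
  · rwa [h] at s
  · rw [h] at s
    exact Relation.EqvGen.trans _ _ _ s L13_equiv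

/-- Every ordered pair of orthogonal Latin squares of order 4 is
`∼'`-equivalent to `(L₁, L₂)`; hence there is exactly one `∼'`-equivalence
class of ordered pairs of orthogonal Latin squares of order 4. -/
theorem ols4_classes :
    (∀ L L' : Fin 4 → Fin 4 → Fin 4,
      IsLatinSquare L → IsLatinSquare L' → IsOrthogonal L L' →
        PairEquiv (L, L') (L₁, L₂)) ∧
    Nat.card (Quotient (olsSetoid 4)) = 1 := by
  refine ⟨all_equiv, ?_⟩
  have bij : ∀ f : Fin 4 → Fin 4, Function.Injective f → Function.Bijective f :=
    fun f h => Finite.injective_iff_bijective.mp h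
  have h1 : IsLatinSquare L₁ := by
    refine ⟨fun i => bij _ ?_, fun i => bij _ ?_⟩ <;> revert i <;> decide
  have h2 : IsLatinSquare L₂ := by
    refine ⟨fun i => bij _ ?_, fun i => bij _ ?_⟩ <;> revert i <;> decide
  have h3 : IsOrthogonal L₁ L₂ := by
    refine Finite.injective_iff_bijective.mp ?_
    decide +kernel
  rw [Nat.card_eq_one_iff_unique]
  refine ⟨⟨fun x y => ?_⟩, ⟨Quotient.mk _ ⟨(L₁, L₂), h1, h2, h3⟩⟩⟩
  induction x using Quotient.inductionOn with | _ P
  induction y using Quotient.inductionOn with | _ Q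
  apply Quotient.sound
  obtain ⟨⟨A, B⟩, p1, p2, p3⟩ := P
  obtain ⟨⟨C, D⟩, q1, q2, q3⟩ := Q
  exact Relation.EqvGen.trans _ _ _ (all_equiv A B p1 p2 p3)
    (Relation.EqvGen.symm _ _ (all_equiv C D q1 q2 q3))
end

section
/- Every ordered pair of orthogonal Latin squares of order 5 is ∼'-equivalent to (C_1, C_4) or to (C_1, C_3) on ZMod 5; since the pair (C_1, C_4) is orthogonal, the set of ∼'-equivalence classes of ordered pairs of orthogonal Latin squares of order 5 has at least one and at most two elements. -/
/-- Both squares are Latin and they are orthogonal. -/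
def GoodPair {α : Type*} (P : (α → α → α) × (α → α → α)) : Prop :=
  IsLatinSquare P.1 ∧ IsLatinSquare P.2 ∧ IsOrthogonal P.1 P.2

theorem PairEquiv.step' {α : Type*} {P Q R : (α → α → α) × (α → α → α)}
    (h : PairStep P Q) (h' : PairEquiv Q R) : PairEquiv P R :=
  Relation.EqvGen.trans _ _ _ (Relation.EqvGen.rel _ _ h) h'

theorem GoodPair.rows {α : Type*} {P : (α → α → α) × (α → α → α)} (h : GoodPair P)
    (a : Equiv.Perm α) :
    GoodPair (fun i j => P.1 (a i) j, fun i j => P.2 (a i) j) := by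
  obtain ⟨h1, h2, h3⟩ := h
  refine ⟨⟨fun i => h1.1 (a i), fun j => (h1.2 j).comp a.bijective⟩,
    ⟨fun i => h2.1 (a i), fun j => (h2.2 j).comp a.bijective⟩, ?_⟩
  exact Function.Bijective.comp h3 (Equiv.prodCongr a (Equiv.refl α)).bijective

theorem GoodPair.cols {α : Type*} {P : (α → α → α) × (α → α → α)} (h : GoodPair P)
    (b : Equiv.Perm α) :
    GoodPair (fun i j => P.1 i (b j), fun i j => P.2 i (b j)) := by
  obtain ⟨h1, h2, h3⟩ := h
  refine ⟨⟨fun i => (h1.1 i).comp b.bijective, fun j => h1.2 (b j)⟩,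
    ⟨fun i => (h2.1 i).comp b.bijective, fun j => h2.2 (b j)⟩, ?_⟩
  exact Function.Bijective.comp h3 (Equiv.prodCongr (Equiv.refl α) b).bijective

theorem GoodPair.relabelFst {α : Type*} {P : (α → α → α) × (α → α → α)} (h : GoodPair P)
    (c : Equiv.Perm α) : GoodPair (fun i j => c (P.1 i j), P.2) := by
  obtain ⟨h1, h2, h3⟩ := h
  refine ⟨⟨fun i => c.bijective.comp (h1.1 i), fun j => c.bijective.comp (h1.2 j)⟩, h2, ?_⟩
  exact Function.Bijective.comp (Equiv.prodCongr c (Equiv.refl α)).bijective h3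

theorem GoodPair.relabelSnd {α : Type*} {P : (α → α → α) × (α → α → α)} (h : GoodPair P)
    (c : Equiv.Perm α) : GoodPair (P.1, fun i j => c (P.2 i j)) := by
  obtain ⟨h1, h2, h3⟩ := h
  refine ⟨h1, ⟨fun i => c.bijective.comp (h2.1 i), fun j => c.bijective.comp (h2.2 j)⟩, ?_⟩
  exact Function.Bijective.comp (Equiv.prodCongr (Equiv.refl α) c).bijective h3

/-- Every cell of the first row of `L` lies on a common transversal coming from `L'`. -/
theorem GoodPair.transversal {L L' : Fin 5 → Fin 5 → Fin 5} (h : GoodPair (L, L')) (s : Fin 5) :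
    ∃ f : Fin 5 → Fin 5, f 0 = s ∧ (∀ i, L' i (f i) = L' 0 s) ∧ Function.Injective f ∧
      Function.Injective (fun i => L i (f i)) := by
  obtain ⟨-, h2, h3⟩ := h
  choose f hf using fun i => (h2.1 i).2 (L' 0 s)
  have hf' : ∀ i, L' i (f i) = L' 0 s := hf
  refine ⟨f, (h2.1 0).1 (hf' 0), hf', ?_, ?_⟩
  · intro i i' e
    apply (h2.2 (f i)).1
    change L' i (f i) = L' i' (f i)
    rw [hf' i, e, hf' i']
  · intro i i' e
    have : (i, f i) = (i', f i') := h3.1 (Prod.ext e ((hf' i).trans (hf' i').symm))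
    exact congrArg Prod.fst this

set_option synthInstance.maxSize 100000 in
set_option synthInstance.maxHeartbeats 0 in
set_option maxRecDepth 100000 in
set_option maxHeartbeats 0 in
/-- The transversals of the cyclic square of order 5 are linear. -/
theorem linear_transversal_aux : ∀ a b : Fin 5, a ≠ b → a ≠ b + 1 → ∀ c : Fin 5,
    c ≠ a → c ≠ b → c + 2 ≠ a → c + 2 ≠ b + 1 → ∀ d : Fin 5, d ≠ a → d ≠ b → d ≠ c →
    d + 3 ≠ a → d + 3 ≠ b + 1 → d + 3 ≠ c + 2 → ∀ e : Fin 5, e ≠ a → e ≠ b → e ≠ c → e ≠ d →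
    e + 4 ≠ a → e + 4 ≠ b + 1 → e + 4 ≠ c + 2 → e + 4 ≠ d + 3 →
    ∃ m : Fin 5, m ≠ 0 ∧ m ≠ 4 ∧ b = a + m * 1 ∧ c = a + m * 2 ∧ d = a + m * 3 ∧
      e = a + m * 4 := by
  decide +kernel

theorem linear_transversal (f : Fin 5 → Fin 5) (h : Function.Injective f)
    (h' : Function.Injective (fun i => f i + i)) :
    ∃ m : Fin 5, m ≠ 0 ∧ m ≠ 4 ∧ ∀ i, f i = f 0 + m * i := by
  have n (i j : Fin 5) (hij : i ≠ j) : f i ≠ f j := fun e => hij (h e)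
  have n' (i j : Fin 5) (hij : i ≠ j) : f i + i ≠ f j + j := fun e => hij (h' e)
  have z : f 0 + 0 = f 0 := add_zero _
  obtain ⟨m, m0, m4, h1, h2, h3, h4⟩ := linear_transversal_aux (f 0) (f 1)
    (n 0 1 (by decide)) (z ▸ n' 0 1 (by decide)) (f 2)
    (n 2 0 (by decide)) (n 2 1 (by decide)) (z ▸ n' 2 0 (by decide)) (n' 2 1 (by decide)) (f 3)
    (n 3 0 (by decide)) (n 3 1 (by decide)) (n 3 2 (by decide)) (z ▸ n' 3 0 (by decide))
    (n' 3 1 (by decide)) (n' 3 2 (by decide)) (f 4)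
    (n 4 0 (by decide)) (n 4 1 (by decide)) (n 4 2 (by decide)) (n 4 3 (by decide))
    (z ▸ n' 4 0 (by decide)) (n' 4 1 (by decide)) (n' 4 2 (by decide)) (n' 4 3 (by decide))
  refine ⟨m, m0, m4, fun i => ?_⟩
  fin_cases i
  · simp
  · exact h1
  · exact h2
  · exact h3
  · exact h4

theorem slope_unique : ∀ s m m' : Fin 5, s ≠ 0 → (∀ i : Fin 5, s + m * i ≠ 0 + m' * i) →
    m = m' := by
  decide +kernel

/-- A square orthogonal to `C₁` whose first row is the identity is `C_d`. -/
theorem mate_of_cyclic {L' : Fin 5 → Fin 5 → Fin 5}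
    (h : GoodPair ((fun i j => j + i : Fin 5 → Fin 5 → Fin 5), L')) (h0 : ∀ j, L' 0 j = j) :
    ∃ m : Fin 5, m ≠ 0 ∧ m ≠ 4 ∧ ∀ i j, L' i j = j - m * i := by
  have key : ∀ s, ∃ m : Fin 5, m ≠ 0 ∧ m ≠ 4 ∧ ∀ i, L' i (s + m * i) = s := by
    intro s
    obtain ⟨f, f0, hf, i1, i2⟩ := h.transversal s
    obtain ⟨m, m0, m4, hm⟩ := linear_transversal f i1 i2
    refine ⟨m, m0, m4, fun i => ?_⟩
    rw [← f0, ← hm i, hf i, h0, f0]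
  choose m m0 m4 hm using key
  have e : ∀ s, m s = m 0 := by
    intro s
    by_cases hs : s = 0
    · rw [hs]
    · refine slope_unique s _ _ hs fun i hi => hs ?_
      rw [← hm s i, hi, hm 0 i]
  refine ⟨m 0, m0 0, m4 0, fun i j => ?_⟩
  have := hm (j - m 0 * i) i
  rw [e (j - m 0 * i), sub_add_cancel] at this
  exact this

theorem csq_ext {F : Fin 5 → Fin 5 → Fin 5} (c : Fin 5) (h : ∀ i j, F i j = j + c * i) :
    F = Csq 5 c := by
  funext i j
  exact h i j

theorem classify_cyclic {L' : Fin 5 → Fin 5 → Fin 5}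
    (h : GoodPair ((fun i j => j + i : Fin 5 → Fin 5 → Fin 5), L')) :
    PairEquiv ((fun i j => j + i : Fin 5 → Fin 5 → Fin 5), L') (Csq 5 1, Csq 5 4) ∨
    PairEquiv ((fun i j => j + i : Fin 5 → Fin 5 → Fin 5), L') (Csq 5 1, Csq 5 3) := by
  let c : Equiv.Perm (Fin 5) := (Equiv.ofBijective _ (h.2.1.1 0)).symm
  have hc : ∀ j, c (L' 0 j) = j := fun j => Equiv.ofBijective_symm_apply_apply _ _ j
  obtain ⟨m, m0, m4, hm⟩ := mate_of_cyclic (h.relabelSnd c) hc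
  have st := PairStep.relabelSnd ((fun i j => j + i : Fin 5 → Fin 5 → Fin 5), L') c
  have hm' : (fun i j => c (L' i j)) = fun i j : Fin 5 => j - m * i := by
    funext i j; exact hm i j
  have c1 : (fun i j => j + i : Fin 5 → Fin 5 → Fin 5) = Csq 5 1 := by exact csq_ext 1 (by decide)
  simp only [hm'] at st
  have hm3 : m = 1 ∨ m = 2 ∨ m = 3 := by
    clear hm hm' st
    revert m; decide
  rcases hm3 with rfl | rfl | rfl
  · left
    refine PairEquiv.step' st ?_
    have : (fun i j : Fin 5 => j - 1 * i) = Csq 5 4 := by exact csq_ext 4 (by decide)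
    rw [this, c1]
    exact Relation.EqvGen.refl _
  · right
    refine PairEquiv.step' st ?_
    have : (fun i j : Fin 5 => j - 2 * i) = Csq 5 3 := by exact csq_ext 3 (by decide)
    rw [this, c1]
    exact Relation.EqvGen.refl _
  · right
    refine PairEquiv.step' st (PairEquiv.step' (PairStep.swap _) ?_)
    let a : Equiv.Perm (Fin 5) :=
      ⟨fun i => 3 * i, fun i => 2 * i, by decide, by decide⟩
    refine PairEquiv.step' (PairStep.rows _ a) ?_
    have e1 : (fun i j : Fin 5 => j - 3 * (a i)) = Csq 5 1 := by exact csq_ext 1 (by decide)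
    have e2 : (fun i j : Fin 5 => j + a i) = Csq 5 3 := by exact csq_ext 3 (by decide)
    simp only [e1, e2]
    exact Relation.EqvGen.refl _

/-- The transversal condition for a normalised square, in search order. -/
def NoTrans (M : Fin 5 → Fin 5 → Fin 5) (s : Fin 5) : Prop :=
  ∀ a : Fin 5, a ≠ s → M 1 a ≠ s → ∀ b : Fin 5, b ≠ s → b ≠ a → M 2 b ≠ s → M 2 b ≠ M 1 a →
  ∀ c : Fin 5, c ≠ s → c ≠ a → c ≠ b → M 3 c ≠ s → M 3 c ≠ M 1 a → M 3 c ≠ M 2 b →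
  ∀ d : Fin 5, d ≠ s → d ≠ a → d ≠ b → d ≠ c → M 4 d ≠ s → M 4 d ≠ M 1 a → M 4 d ≠ M 2 b →
    ¬ M 4 d ≠ M 3 c

set_option synthInstance.maxSize 100000 in
set_option synthInstance.maxHeartbeats 0 in
set_option maxRecDepth 100000 in
set_option maxHeartbeats 0 in
instance (M : Fin 5 → Fin 5 → Fin 5) (s : Fin 5) : Decidable (NoTrans M s) := by
  unfold NoTrans; infer_instance

/-- The map fixing 0 and 1 with the given values at 2, 3, 4. -/
def pmap (a b c : Fin 5) : Fin 5 → Fin 5 := ![0, 1, a, b, c]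

/-- A normalised square is the table of a cyclic group. -/
def IsCyc (M : Fin 5 → Fin 5 → Fin 5) : Prop :=
  ∃ a b c : Fin 5, (a ≠ 0 ∧ a ≠ 1 ∧ b ≠ 0 ∧ b ≠ 1 ∧ c ≠ 0 ∧ c ≠ 1 ∧ a ≠ b ∧ a ≠ c ∧ b ≠ c) ∧
    ∀ i j, pmap a b c (M i j) = pmap a b c j + pmap a b c i

instance (M : Fin 5 → Fin 5 → Fin 5) : Decidable (IsCyc M) := by
  unfold IsCyc; infer_instance

/-- The square with given rows below the identity row. -/
def mk5 (a b c d e f g h k l m n o p q r : Fin 5) : Fin 5 → Fin 5 → Fin 5 :=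
  ![![0, 1, 2, 3, 4], ![1, a, b, c, d], ![2, e, f, g, h], ![3, k, l, m, n], ![4, o, p, q, r]]

set_option synthInstance.maxSize 100000 in
set_option synthInstance.maxHeartbeats 0 in
set_option maxRecDepth 100000 in
set_option maxHeartbeats 0 in
theorem reduced_search :
    ∀ a : Fin 5, a ≠ 1 → a ≠ 1 →
    ∀ b : Fin 5, b ≠ 1 → b ≠ a → b ≠ 2 →
    ∀ c : Fin 5, c ≠ 1 → c ≠ a → c ≠ b → c ≠ 3 →
    ∀ d : Fin 5, d ≠ 1 → d ≠ a → d ≠ b → d ≠ c → d ≠ 4 →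
    ∀ e : Fin 5, e ≠ 2 → e ≠ 1 → e ≠ a →
    ∀ f : Fin 5, f ≠ 2 → f ≠ e → f ≠ 2 → f ≠ b →
    ∀ g : Fin 5, g ≠ 2 → g ≠ e → g ≠ f → g ≠ 3 → g ≠ c →
    ∀ h : Fin 5, h ≠ 2 → h ≠ e → h ≠ f → h ≠ g → h ≠ 4 → h ≠ d →
    ∀ k : Fin 5, k ≠ 3 → k ≠ 1 → k ≠ a → k ≠ e →
    ∀ l : Fin 5, l ≠ 3 → l ≠ k → l ≠ 2 → l ≠ b → l ≠ f →
    ∀ m : Fin 5, m ≠ 3 → m ≠ k → m ≠ l → m ≠ 3 → m ≠ c → m ≠ g →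
    ∀ n : Fin 5, n ≠ 3 → n ≠ k → n ≠ l → n ≠ m → n ≠ 4 → n ≠ d → n ≠ h →
    ∀ o : Fin 5, o ≠ 4 → o ≠ 1 → o ≠ a → o ≠ e → o ≠ k →
    ∀ p : Fin 5, p ≠ 4 → p ≠ o → p ≠ 2 → p ≠ b → p ≠ f → p ≠ l →
    ∀ q : Fin 5, q ≠ 4 → q ≠ o → q ≠ p → q ≠ 3 → q ≠ c → q ≠ g → q ≠ m →
    ∀ r : Fin 5, r ≠ 4 → r ≠ o → r ≠ p → r ≠ q → r ≠ 4 → r ≠ d → r ≠ h → r ≠ n →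
    IsCyc (mk5 a b c d e f g h k l m n o p q r) ∨ ∃ s, NoTrans (mk5 a b c d e f g h k l m n o p q r) s := by
  decide +kernel

theorem reduced_cyclic {L L' : Fin 5 → Fin 5 → Fin 5} (h : GoodPair (L, L'))
    (hr0 : ∀ j, L 0 j = j) (hc0 : ∀ i, L i 0 = i) : IsCyc L := by
  have hR (i j j' : Fin 5) (n : j ≠ j') : L i j ≠ L i j' := fun e => n ((h.1.1 i).1 e)
  have hC (j i i' : Fin 5) (n : i ≠ i') : L i j ≠ L i' j := fun e => n ((h.1.2 j).1 e)
  have good := h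
  have h := reduced_search
  have h := h (L 1 1)
  have h := h (fun e => (hR 1 1 0 (by decide)) (e.trans (hc0 1).symm))
  have h := h (fun e => (hC 1 1 0 (by decide)) (e.trans (hr0 1).symm))
  have h := h (L 1 2)
  have h := h (fun e => (hR 1 2 0 (by decide)) (e.trans (hc0 1).symm))
  have h := h (hR 1 2 1 (by decide))
  have h := h (fun e => (hC 2 1 0 (by decide)) (e.trans (hr0 2).symm))
  have h := h (L 1 3)
  have h := h (fun e => (hR 1 3 0 (by decide)) (e.trans (hc0 1).symm))
  have h := h (hR 1 3 1 (by decide))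
  have h := h (hR 1 3 2 (by decide))
  have h := h (fun e => (hC 3 1 0 (by decide)) (e.trans (hr0 3).symm))
  have h := h (L 1 4)
  have h := h (fun e => (hR 1 4 0 (by decide)) (e.trans (hc0 1).symm))
  have h := h (hR 1 4 1 (by decide))
  have h := h (hR 1 4 2 (by decide))
  have h := h (hR 1 4 3 (by decide))
  have h := h (fun e => (hC 4 1 0 (by decide)) (e.trans (hr0 4).symm))
  have h := h (L 2 1)
  have h := h (fun e => (hR 2 1 0 (by decide)) (e.trans (hc0 2).symm))
  have h := h (fun e => (hC 1 2 0 (by decide)) (e.trans (hr0 1).symm))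
  have h := h (hC 1 2 1 (by decide))
  have h := h (L 2 2)
  have h := h (fun e => (hR 2 2 0 (by decide)) (e.trans (hc0 2).symm))
  have h := h (hR 2 2 1 (by decide))
  have h := h (fun e => (hC 2 2 0 (by decide)) (e.trans (hr0 2).symm))
  have h := h (hC 2 2 1 (by decide))
  have h := h (L 2 3)
  have h := h (fun e => (hR 2 3 0 (by decide)) (e.trans (hc0 2).symm))
  have h := h (hR 2 3 1 (by decide))
  have h := h (hR 2 3 2 (by decide))
  have h := h (fun e => (hC 3 2 0 (by decide)) (e.trans (hr0 3).symm))
  have h := h (hC 3 2 1 (by decide))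
  have h := h (L 2 4)
  have h := h (fun e => (hR 2 4 0 (by decide)) (e.trans (hc0 2).symm))
  have h := h (hR 2 4 1 (by decide))
  have h := h (hR 2 4 2 (by decide))
  have h := h (hR 2 4 3 (by decide))
  have h := h (fun e => (hC 4 2 0 (by decide)) (e.trans (hr0 4).symm))
  have h := h (hC 4 2 1 (by decide))
  have h := h (L 3 1)
  have h := h (fun e => (hR 3 1 0 (by decide)) (e.trans (hc0 3).symm))
  have h := h (fun e => (hC 1 3 0 (by decide)) (e.trans (hr0 1).symm))
  have h := h (hC 1 3 1 (by decide))
  have h := h (hC 1 3 2 (by decide))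
  have h := h (L 3 2)
  have h := h (fun e => (hR 3 2 0 (by decide)) (e.trans (hc0 3).symm))
  have h := h (hR 3 2 1 (by decide))
  have h := h (fun e => (hC 2 3 0 (by decide)) (e.trans (hr0 2).symm))
  have h := h (hC 2 3 1 (by decide))
  have h := h (hC 2 3 2 (by decide))
  have h := h (L 3 3)
  have h := h (fun e => (hR 3 3 0 (by decide)) (e.trans (hc0 3).symm))
  have h := h (hR 3 3 1 (by decide))
  have h := h (hR 3 3 2 (by decide))
  have h := h (fun e => (hC 3 3 0 (by decide)) (e.trans (hr0 3).symm))
  have h := h (hC 3 3 1 (by decide))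
  have h := h (hC 3 3 2 (by decide))
  have h := h (L 3 4)
  have h := h (fun e => (hR 3 4 0 (by decide)) (e.trans (hc0 3).symm))
  have h := h (hR 3 4 1 (by decide))
  have h := h (hR 3 4 2 (by decide))
  have h := h (hR 3 4 3 (by decide))
  have h := h (fun e => (hC 4 3 0 (by decide)) (e.trans (hr0 4).symm))
  have h := h (hC 4 3 1 (by decide))
  have h := h (hC 4 3 2 (by decide))
  have h := h (L 4 1)
  have h := h (fun e => (hR 4 1 0 (by decide)) (e.trans (hc0 4).symm))
  have h := h (fun e => (hC 1 4 0 (by decide)) (e.trans (hr0 1).symm))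
  have h := h (hC 1 4 1 (by decide))
  have h := h (hC 1 4 2 (by decide))
  have h := h (hC 1 4 3 (by decide))
  have h := h (L 4 2)
  have h := h (fun e => (hR 4 2 0 (by decide)) (e.trans (hc0 4).symm))
  have h := h (hR 4 2 1 (by decide))
  have h := h (fun e => (hC 2 4 0 (by decide)) (e.trans (hr0 2).symm))
  have h := h (hC 2 4 1 (by decide))
  have h := h (hC 2 4 2 (by decide))
  have h := h (hC 2 4 3 (by decide))
  have h := h (L 4 3)
  have h := h (fun e => (hR 4 3 0 (by decide)) (e.trans (hc0 4).symm))
  have h := h (hR 4 3 1 (by decide))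
  have h := h (hR 4 3 2 (by decide))
  have h := h (fun e => (hC 3 4 0 (by decide)) (e.trans (hr0 3).symm))
  have h := h (hC 3 4 1 (by decide))
  have h := h (hC 3 4 2 (by decide))
  have h := h (hC 3 4 3 (by decide))
  have h := h (L 4 4)
  have h := h (fun e => (hR 4 4 0 (by decide)) (e.trans (hc0 4).symm))
  have h := h (hR 4 4 1 (by decide))
  have h := h (hR 4 4 2 (by decide))
  have h := h (hR 4 4 3 (by decide))
  have h := h (fun e => (hC 4 4 0 (by decide)) (e.trans (hr0 4).symm))
  have h := h (hC 4 4 1 (by decide))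
  have h := h (hC 4 4 2 (by decide))
  have h := h (hC 4 4 3 (by decide))
  have e : mk5 (L 1 1) (L 1 2) (L 1 3) (L 1 4) (L 2 1) (L 2 2) (L 2 3) (L 2 4) (L 3 1) (L 3 2) (L 3 3) (L 3 4) (L 4 1) (L 4 2) (L 4 3) (L 4 4) = L := by
    funext i j
    fin_cases i
    · rw [show ((fun i => i) (⟨0, by decide⟩ : Fin 5)) = 0 from rfl, hr0 j]
      fin_cases j <;> rfl
    all_goals
      fin_cases j
      · exact (hc0 _).symm
      all_goals rfl
  rw [e] at h
  rcases h with h | ⟨s, hs⟩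
  · exact h
  exfalso
  obtain ⟨f, f0, -, i1, i2⟩ := good.transversal s
  have n (i j : Fin 5) (hij : i ≠ j) : f i ≠ f j := fun e => hij (i1 e)
  have n' (i j : Fin 5) (hij : i ≠ j) : L i (f i) ≠ L j (f j) := fun e => hij (i2 e)
  have z : L 0 (f 0) = s := by rw [hr0, f0]
  exact hs (f 1) (f0 ▸ n 1 0 (by decide)) (z ▸ n' 1 0 (by decide))
    (f 2) (f0 ▸ n 2 0 (by decide)) (n 2 1 (by decide)) (z ▸ n' 2 0 (by decide))
    (n' 2 1 (by decide))
    (f 3) (f0 ▸ n 3 0 (by decide)) (n 3 1 (by decide)) (n 3 2 (by decide))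
    (z ▸ n' 3 0 (by decide)) (n' 3 1 (by decide)) (n' 3 2 (by decide))
    (f 4) (f0 ▸ n 4 0 (by decide)) (n 4 1 (by decide)) (n 4 2 (by decide)) (n 4 3 (by decide))
    (z ▸ n' 4 0 (by decide)) (n' 4 1 (by decide)) (n' 4 2 (by decide)) (n' 4 3 (by decide))

theorem pmap_inj : ∀ a b c : Fin 5,
    (a ≠ 0 ∧ a ≠ 1 ∧ b ≠ 0 ∧ b ≠ 1 ∧ c ≠ 0 ∧ c ≠ 1 ∧ a ≠ b ∧ a ≠ c ∧ b ≠ c) →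
    Function.Injective (pmap a b c) := by
  unfold Function.Injective
  decide +kernel

theorem classify_all {L L' : Fin 5 → Fin 5 → Fin 5} (h : GoodPair (L, L')) :
    PairEquiv (L, L') (Csq 5 1, Csq 5 4) ∨ PairEquiv (L, L') (Csq 5 1, Csq 5 3) := by
  let c : Equiv.Perm (Fin 5) := (Equiv.ofBijective _ (h.1.1 0)).symm
  have hc : ∀ j, c (L 0 j) = j := fun j => Equiv.ofBijective_symm_apply_apply _ _ j
  have g1 := h.relabelFst c
  let a : Equiv.Perm (Fin 5) := (Equiv.ofBijective _ (g1.1.2 0)).symm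
  have ha : ∀ i, c (L (a i) 0) = i := fun i =>
    Equiv.ofBijective_apply_symm_apply _ (g1.1.2 0) i
  have ha' : ∀ i, a (c (L i 0)) = i := fun i =>
    Equiv.ofBijective_symm_apply_apply _ (g1.1.2 0) i
  have a0 : a 0 = 0 := by
    have := ha' 0
    rwa [hc] at this
  have g2 := g1.rows a
  obtain ⟨x, y, z, hne, hp⟩ := reduced_cyclic g2 (by
    intro j
    change c (L (a 0) j) = j
    rw [a0, hc]) ha
  let p : Equiv.Perm (Fin 5) := Equiv.ofBijective (pmap x y z)
    (Finite.injective_iff_bijective.mp (pmap_inj x y z hne))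
  have hp' : ∀ i j, p (c (L (a i) j)) = p j + p i := hp
  have g3 := ((g2.rows p.symm).cols p.symm).relabelFst p
  have e : (fun i j => p (c (L (a (p.symm i)) (p.symm j)))) = fun i j => j + i := by
    funext i j
    rw [hp']
    simp
  have s1 := PairStep.relabelFst (L, L') c
  have s2 := PairStep.rows (fun i j => c (L i j), L') a
  have s3 := PairStep.rows (fun i j => c (L (a i) j), fun i j => L' (a i) j) p.symm
  have s4 := PairStep.cols (fun i j => c (L (a (p.symm i)) j),
    fun i j => L' (a (p.symm i)) j) p.symm
  have s5 := PairStep.relabelFst (fun i j => c (L (a (p.symm i)) (p.symm j)),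
    fun i j => L' (a (p.symm i)) (p.symm j)) p
  simp only [e] at g3 s5
  rcases classify_cyclic g3 with r | r
  · exact Or.inl (.step' s1 (.step' s2 (.step' s3 (.step' s4 (.step' s5 r)))))
  · exact Or.inr (.step' s1 (.step' s2 (.step' s3 (.step' s4 (.step' s5 r)))))

theorem good14 : GoodPair ((Csq 5 1, Csq 5 4) : (Fin 5 → Fin 5 → Fin 5) × _) := by
  unfold GoodPair IsLatinSquare IsOrthogonal Csq
  decide +kernel

theorem good13 : GoodPair ((Csq 5 1, Csq 5 3) : (Fin 5 → Fin 5 → Fin 5) × _) := by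
  unfold GoodPair IsLatinSquare IsOrthogonal Csq
  decide +kernel

/-- Every ordered pair of orthogonal Latin squares of order 5 is
`∼'`-equivalent to `(C₁, C₄)` or to `(C₁, C₃)` on `ZMod 5`; since `(C₁, C₄)`
is orthogonal, the set of `∼'`-classes of ordered pairs of orthogonal Latin
squares of order 5 has at least one and at most two elements.
(`ZMod 5` is identified with `Fin 5`.) -/
theorem ols5_classes :
    (∀ L L' : Fin 5 → Fin 5 → Fin 5,
      IsLatinSquare L → IsLatinSquare L' → IsOrthogonal L L' →
        PairEquiv (L, L') (Csq 5 1, Csq 5 4) ∨ PairEquiv (L, L') (Csq 5 1, Csq 5 3)) ∧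
    IsOrthogonal (Csq 5 1) (Csq 5 4) ∧
    1 ≤ Nat.card (Quotient (olsSetoid 5)) ∧
    Nat.card (Quotient (olsSetoid 5)) ≤ 2 := by
  refine ⟨fun L L' h1 h2 h3 => classify_all ⟨h1, h2, h3⟩, good14.2.2, ?_⟩
  let f : Bool → Quotient (olsSetoid 5) := fun b =>
    if b then Quotient.mk _ (⟨_, good14⟩ : OLSPair 5) else Quotient.mk _ (⟨_, good13⟩ : OLSPair 5)
  have hf : Function.Surjective f := by
    intro q
    induction q using Quotient.inductionOn with
    | h P =>
      rcases classify_all (L := P.val.1) (L' := P.val.2) P.property with r | r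
      · exact ⟨true, Quotient.sound (s := olsSetoid 5) (Relation.EqvGen.symm _ _ r)⟩
      · exact ⟨false, Quotient.sound (s := olsSetoid 5) (Relation.EqvGen.symm _ _ r)⟩
  have : Finite (Quotient (olsSetoid 5)) := Finite.of_surjective f hf
  have : Nonempty (Quotient (olsSetoid 5)) := ⟨f true⟩
  refine ⟨Nat.card_pos, ?_⟩
  have := Nat.card_le_card_of_surjective f hf
  simpa using this
end

section
/- If k ≥ 3 is odd and L ∈ G_k, then there exists a Latin square L' ∈ G_k that is orthogonal to L. -/
/-- If `k ≥ 3` is odd and `L ∈ Gₖ`, then some `L' ∈ Gₖ` is orthogonal to `L`. -/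
theorem gset_has_orthogonal_mate_of_odd {k : ℕ} (hk : 3 ≤ k) (hodd : Odd k)
    (L : Fin k → Fin k → Fin k) (hL : L ∈ GSet k) :
    ∃ L' ∈ GSet k, IsOrthogonal L L' := by
  obtain ⟨H, ⟨hH, σ, hσ, hcard, hstep⟩, a, b, c, hc⟩ := hL
  have h0 : 0 < k := by omega
  have hpow : ∀ (i : ℕ) (h : i < k) (p : Fin k), H ⟨i, h⟩ p = (σ ^ i) (H ⟨0, h0⟩ p) := by
    intro i
    induction i with
    | zero => intro h p; simp
    | succ n ih =>
      intro h p
      rw [← hstep n h p, ih (by omega) p, pow_succ', Equiv.Perm.mul_apply]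
  have hord : orderOf σ = k := by rw [hσ.orderOf, hcard]
  have hcop : Nat.Coprime 2 (orderOf σ) := by
    rw [hord]; exact (Nat.coprime_two_left).2 hodd
  have hsupp : σ.support = Finset.univ := by
    rw [← Finset.card_eq_iff_eq_univ, hcard, Fintype.card_fin]
  have hne : ∀ x, σ x ≠ x := fun x => by
    rw [← Equiv.Perm.mem_support, hsupp]; exact Finset.mem_univ x
  have hinj : ∀ (m n : ℕ) (x : Fin k), m < k → n < k → (σ ^ m) x = (σ ^ n) x → m = n := by
    intro m n x hm hn h
    have h1 : σ ^ m = σ ^ n := hσ.pow_eq_pow_iff.2 ⟨x, hne x, h⟩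
    exact pow_injOn_Iio_orderOf (by simpa [hord] using hm) (by simpa [hord] using hn) h1
  have hτ : (σ ^ 2).IsCycle := hσ.pow_iff.2 hcop
  have hτs : (σ ^ 2).support = Finset.univ := by
    rw [Equiv.Perm.support_pow_coprime hcop, hsupp]
  have hτne : ∀ x, (σ ^ 2) x ≠ x := fun x => by
    rw [← Equiv.Perm.mem_support, hτs]; exact Finset.mem_univ x
  have hτord : orderOf (σ ^ 2) = k := by rw [hτ.orderOf, hτs]; simp
  have hτinj : ∀ (m n : ℕ) (x : Fin k), m < k → n < k →
      ((σ ^ 2) ^ m) x = ((σ ^ 2) ^ n) x → m = n := by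
    intro m n x hm hn h
    have h1 : (σ ^ 2) ^ m = (σ ^ 2) ^ n := hτ.pow_eq_pow_iff.2 ⟨x, hτne x, h⟩
    exact pow_injOn_Iio_orderOf (by simpa [hτord] using hm) (by simpa [hτord] using hn) h1
  let H' : Fin k → Fin k → Fin k := fun i p => ((σ ^ 2) ^ (i : ℕ)) (H ⟨0, h0⟩ p)
  have hH' : ∀ i p, H' i p = (σ ^ (i : ℕ)) (H i p) := by
    intro i p
    rw [hpow i.1 i.2 p, ← Equiv.Perm.mul_apply, ← pow_add, ← two_mul, pow_mul]
  refine ⟨fun i j => H' (a.symm i) (b.symm j), ⟨H', ⟨⟨?_, ?_⟩, σ ^ 2, hτ, ?_, ?_⟩, a, b, 1, ?_⟩, ?_⟩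
  · intro i
    exact ((σ ^ 2) ^ (i : ℕ)).bijective.comp (hH.1 ⟨0, h0⟩)
  · intro j
    refine Finite.injective_iff_bijective.1 ?_
    intro m n h
    exact Fin.ext (hτinj _ _ _ m.2 n.2 h)
  · rw [hτs]; simp
  · intro i h p
    simp only [H']
    rw [pow_succ' (σ ^ 2) i, Equiv.Perm.mul_apply]
  · intro i j; simp
  · refine Finite.injective_iff_bijective.1 ?_
    rintro ⟨i, j⟩ ⟨i', j'⟩ h
    simp only [Prod.mk.injEq] at h
    obtain ⟨h1, h2⟩ := h
    have e1 : H (a.symm i) (b.symm j) = H (a.symm i') (b.symm j') := by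
      rw [hc, hc]; simp [h1]
    rw [hH', hH', e1] at h2
    have e2 : a.symm i = a.symm i' := Fin.ext (hinj _ _ _ (a.symm i).2 (a.symm i').2 h2)
    rw [e2] at e1
    have e3 := (hH.1 _).1 e1
    rw [a.symm.injective e2, b.symm.injective e3]
end

section
/- There exists a (4,3)-net in ℂℙ² (the Hessian configuration), and it is unique up to projective isomorphism: for any two (4,3)-nets (A, χ) and (A', χ') in ℂℙ² there exists a linear automorphism g ∈ GL(3, ℂ) whose induced action on subspaces of ℂ³ maps the set of lines ⋃_{i} A i bijectively onto the set of lines ⋃_{i} A' i. -/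
/-- An `(n,k)`-net in `ℂℙ²`. Points of `ℂℙ²` are the 1-dimensional `ℂ`-linear
subspaces of `ℂ³` and lines are the 2-dimensional subspaces; a point `p` lies
on a line `ℓ` iff `p ≤ ℓ`. `A` assigns to each `i : Fin n` a finite set of `k`
lines, the classes `A i` are pairwise disjoint, `χ` is a finite set of points,
lines from different classes are distinct and meet in a point of `χ`, and
through every point of `χ` there passes exactly one line of each class. -/
structure IsNet (n k : ℕ) (A : Fin n → Finset (Submodule ℂ (Fin 3 → ℂ)))
    (χ : Finset (Submodule ℂ (Fin 3 → ℂ))) : Prop where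
  three_le : 3 ≤ n
  line_dim : ∀ i, ∀ ℓ ∈ A i, Module.finrank ℂ ℓ = 2
  point_dim : ∀ p ∈ χ, Module.finrank ℂ p = 1
  card_eq : ∀ i, (A i).card = k
  classes_disjoint : ∀ i j, i ≠ j → Disjoint (A i) (A j)
  inter_mem : ∀ i j, i ≠ j → ∀ ℓ₁ ∈ A i, ∀ ℓ₂ ∈ A j, ℓ₁ ≠ ℓ₂ ∧ ℓ₁ ⊓ ℓ₂ ∈ χ
  unique_line : ∀ X ∈ χ, ∀ i, ∃! ℓ, ℓ ∈ A i ∧ X ≤ ℓ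

namespace HessianNet

open Submodule

/-- The four parallel classes of the affine plane of order three. -/
def idx : Fin 4 → Fin 3 → Fin 3 → Fin 3 :=
  ![fun a _ => a, fun _ b => b, fun a b => a + b, fun a b => b - a]

/-- Lines and points labelled by the affine plane of order three. -/
structure Config (L : Fin 4 → Fin 3 → Submodule ℂ (Fin 3 → ℂ))
    (p : Fin 3 → Fin 3 → Submodule ℂ (Fin 3 → ℂ)) : Prop where
  ldim : ∀ i c, Module.finrank ℂ (L i c) = 2
  pdim : ∀ a b, Module.finrank ℂ (p a b) = 1
  inc : ∀ i c a b, p a b ≤ L i c ↔ idx i a b = c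

lemma latin (f : Fin 3 → Fin 3 → Fin 3) (h0 : ∀ b, f 0 b = b)
    (hr : ∀ a b b', f a b = f a b' → b = b') (hc : ∀ a a' b, f a b = f a' b → a = a') :
    (∀ a b, f a b = a + b) ∨ (∀ a b, f a b = b - a) := by
  have key : ∀ x0 x1 x2 : Fin 3, x0 ≠ x1 → x0 ≠ x2 → x1 ≠ x2 → x0 ≠ 0 → x1 ≠ 1 → x2 ≠ 2 →
    (x0 = 1 ∧ x1 = 2 ∧ x2 = 0) ∨ (x0 = 2 ∧ x1 = 0 ∧ x2 = 1) := by decide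
  have r : ∀ a b b', b ≠ b' → f a b ≠ f a b' := fun a b b' h h' => h (hr _ _ _ h')
  have c : ∀ a a' b, a ≠ a' → f a b ≠ f a' b := fun a b b' h h' => h (hc _ _ _ h')
  have k1 := key (f 1 0) (f 1 1) (f 1 2) (r _ _ _ (by decide)) (r _ _ _ (by decide))
    (r _ _ _ (by decide)) (by simpa [h0] using c 1 0 0 (by decide))
    (by simpa [h0] using c 1 0 1 (by decide)) (by simpa [h0] using c 1 0 2 (by decide))
  have k2 := key (f 2 0) (f 2 1) (f 2 2) (r _ _ _ (by decide)) (r _ _ _ (by decide))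
    (r _ _ _ (by decide)) (by simpa [h0] using c 2 0 0 (by decide))
    (by simpa [h0] using c 2 0 1 (by decide)) (by simpa [h0] using c 2 0 2 (by decide))
  have c0 := c 1 2 0 (by decide)
  rcases k1 with ⟨u0, u1, u2⟩ | ⟨u0, u1, u2⟩ <;> rcases k2 with ⟨w0, w1, w2⟩ | ⟨w0, w1, w2⟩
  · exact absurd (u0.trans w0.symm) c0
  · left
    intro a b
    fin_cases a <;> fin_cases b <;> simp [h0, u0, u1, u2, w0, w1, w2]
  · right
    intro a b
    fin_cases a <;> fin_cases b <;> simp [h0, u0, u1, u2, w0, w1, w2] <;> decide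
  · exact absurd (u0.trans w0.symm) c0

lemma exists_config {A : Fin 4 → Finset (Submodule ℂ (Fin 3 → ℂ))}
    {χ : Finset (Submodule ℂ (Fin 3 → ℂ))} (h : IsNet 4 3 A χ) :
    ∃ L p, Config L p ∧ (⋃ i, (A i : Set (Submodule ℂ (Fin 3 → ℂ)))) = {ℓ | ∃ i c, ℓ = L i c} := by
  classical
  let e : ∀ i, Fin 3 ≃ A i := fun i => ((A i).equivFinOfCardEq (h.card_eq i)).symm
  let E : Fin 4 → Fin 3 → Submodule ℂ (Fin 3 → ℂ) := fun i c => (e i c : Submodule ℂ (Fin 3 → ℂ))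
  have EA : ∀ i c, E i c ∈ A i := fun i c => (e i c).2
  have Einj : ∀ i c d, E i c = E i d → c = d := fun i c d hh => (e i).injective (Subtype.ext hh)
  have Esurj : ∀ i, ∀ ℓ ∈ A i, ∃ c, E i c = ℓ := fun i ℓ hl =>
    ⟨(e i).symm ⟨ℓ, hl⟩, by simp [E]⟩
  let X : Fin 3 → Fin 3 → Submodule ℂ (Fin 3 → ℂ) := fun a b => E 0 a ⊓ E 1 b
  have Xm : ∀ a b, X a b ∈ χ := fun a b => (h.inter_mem 0 1 (by decide) _ (EA _ _) _ (EA _ _)).2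
  have hF : ∀ i a b, ∃ c, ∀ d, X a b ≤ E i d ↔ c = d := by
    intro i a b
    obtain ⟨ℓ, ⟨hl, hx⟩, hu⟩ := h.unique_line _ (Xm a b) i
    obtain ⟨c, rfl⟩ := Esurj i ℓ hl
    refine ⟨c, fun d => ⟨fun hd => ?_, fun hd => hd ▸ hx⟩⟩
    exact (Einj _ _ _ (hu _ ⟨EA i d, hd⟩)).symm
  choose F hF using hF
  have F0 : ∀ a b, F 0 a b = a := fun a b => (hF 0 a b a).1 inf_le_left
  have F1 : ∀ a b, F 1 a b = b := fun a b => (hF 1 a b b).1 inf_le_right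
  have key : ∀ i j, i ≠ j → ∀ a b a' b', F i a b = F i a' b' → F j a b = F j a' b' →
      a = a' ∧ b = b' := by
    intro i j hij a b a' b' h1 h2
    have hm := (h.inter_mem i j hij _ (EA i (F i a b)) _ (EA j (F j a b))).2
    have hd := h.point_dim _ hm
    have e1 : X a b = E i (F i a b) ⊓ E j (F j a b) :=
      Submodule.eq_of_le_of_finrank_eq
        (le_inf ((hF i a b _).2 rfl) ((hF j a b _).2 rfl)) (by rw [hd, h.point_dim _ (Xm a b)])
    have e2 : X a' b' = E i (F i a b) ⊓ E j (F j a b) :=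
      Submodule.eq_of_le_of_finrank_eq
        (le_inf ((hF i a' b' _).2 h1.symm) ((hF j a' b' _).2 h2.symm))
        (by rw [hd, h.point_dim _ (Xm a' b')])
    have e3 := e1.trans e2.symm
    constructor
    · rw [← F0 a b]
      exact (hF 0 a b a').1 (e3 ▸ inf_le_left)
    · rw [← F1 a b]
      exact (hF 1 a b b').1 (e3 ▸ inf_le_right)
  have bij : ∀ i, i ≠ 0 → Function.Bijective (F i 0) := by
    intro i hi
    refine Finite.injective_iff_bijective.1 fun b b' hb => ?_
    exact (key i 0 hi 0 b 0 b' hb (by rw [F0, F0])).2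
  have rel : ∀ i, i ≠ 0 → i ≠ 1 → ∃ (τ : Fin 3 ≃ Fin 3), (∀ a b, F i a b = τ (a + b)) ∨
      (∀ a b, F i a b = τ (b - a)) := by
    intro i hi hi1
    let τ := Equiv.ofBijective _ (bij i hi)
    have hτ : ∀ b, τ b = F i 0 b := fun b => rfl
    refine ⟨τ, ?_⟩
    have := latin (fun a b => τ.symm (F i a b)) (fun b => by simp [← hτ])
      (fun a b b' hh => (key i 0 hi a b a b' (τ.symm.injective hh) (by rw [F0, F0])).2)
      (fun a a' b hh => (key i 1 hi1 a b a' b (τ.symm.injective hh) (by rw [F1, F1])).1)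
    simpa [Equiv.symm_apply_eq] using this
  have fin : ∀ i j (σ τ : Fin 3 ≃ Fin 3), (∀ k : Fin 4, k = 0 ∨ k = 1 ∨ k = i ∨ k = j) →
      (∀ a b, F i a b = σ (a + b)) → (∀ a b, F j a b = τ (b - a)) →
      ∃ L p, Config L p ∧
        (⋃ i, (A i : Set (Submodule ℂ (Fin 3 → ℂ)))) = {ℓ | ∃ i c, ℓ = L i c} := by
    intro i j σ τ hk h1 h2
    refine ⟨![E 0, E 1, fun c => E i (σ c), fun c => E j (τ c)], X, ⟨?_, ?_, ?_⟩, ?_⟩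
    · intro i c
      fin_cases i <;> exact h.line_dim _ _ (EA _ _)
    · exact fun a b => h.point_dim _ (Xm a b)
    · intro k c a b
      fin_cases k
      · simp [hF, idx, F0]
      · simp [hF, idx, F1]
      · simp [hF, idx, h1]
      · simp [hF, idx, h2]
    · ext ℓ
      simp only [Set.mem_iUnion, Set.mem_ofPred_eq, Finset.mem_coe]
      constructor
      · rintro ⟨k, hl⟩
        obtain ⟨c, rfl⟩ := Esurj k ℓ hl
        rcases hk k with rfl | rfl | rfl | rfl
        · exact ⟨0, c, rfl⟩
        · exact ⟨1, c, rfl⟩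
        · exact ⟨2, σ.symm c, by simp⟩
        · exact ⟨3, τ.symm c, by simp⟩
      · rintro ⟨k, c, rfl⟩
        fin_cases k
        · exact ⟨0, EA _ _⟩
        · exact ⟨1, EA _ _⟩
        · exact ⟨i, EA _ _⟩
        · exact ⟨j, EA _ _⟩
  obtain ⟨σ, hσ⟩ := rel 2 (by decide) (by decide)
  obtain ⟨τ, hτ⟩ := rel 3 (by decide) (by decide)
  rcases hσ with hσ | hσ <;> rcases hτ with hτ | hτ
  · have := key 2 3 (by decide) 0 1 1 0 (by rw [hσ, hσ]; rfl) (by rw [hτ, hτ]; rfl)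
    simp at this
  · exact fin 2 3 σ τ (by decide) hσ hτ
  · exact fin 3 2 τ σ (by decide) hτ hσ
  · have := key 2 3 (by decide) 0 0 1 1 (by rw [hσ, hσ]; rfl) (by rw [hτ, hτ]; rfl)
    simp at this

namespace Config

variable {L : Fin 4 → Fin 3 → Submodule ℂ (Fin 3 → ℂ)}
    {p : Fin 3 → Fin 3 → Submodule ℂ (Fin 3 → ℂ)}

lemma ne (h : Config L p) {a b a' b' : Fin 3} (hne : ¬ (a = a' ∧ b = b')) : p a b ≠ p a' b' := by
  intro he
  apply hne
  constructor
  · exact (h.inc 0 a' a b).1 (he ▸ (h.inc 0 a' a' b').2 rfl)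
  · exact (h.inc 1 b' a b).1 (he ▸ (h.inc 1 b' a' b').2 rfl)

lemma line_eq (h : Config L p) {a b a' b' : Fin 3} (hne : ¬ (a = a' ∧ b = b')) {i c}
    (h1 : idx i a b = c) (h2 : idx i a' b' = c) : L i c = p a b ⊔ p a' b' := by
  symm
  have hle := sup_le ((h.inc i c a b).2 h1) ((h.inc i c a' b').2 h2)
  apply Submodule.eq_of_le_of_finrank_le hle
  rw [h.ldim]
  by_contra hlt
  have e1 : p a b = p a b ⊔ p a' b' := Submodule.eq_of_le_of_finrank_le le_sup_left
    (by rw [h.pdim]; omega)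
  have e2 : p a' b' = p a b ⊔ p a' b' := Submodule.eq_of_le_of_finrank_le le_sup_right
    (by rw [h.pdim]; omega)
  exact h.ne hne (e1.trans e2.symm)

/-- The lines joining pairs of points. -/
def S (p : Fin 3 → Fin 3 → Submodule ℂ (Fin 3 → ℂ)) : Set (Submodule ℂ (Fin 3 → ℂ)) :=
  {ℓ | ∃ a b a' b', ¬ (a = a' ∧ b = b') ∧ ℓ = p a b ⊔ p a' b'}

lemma lines_eq (h : Config L p) : {ℓ | ∃ i c, ℓ = L i c} = S p := by
  ext ℓ
  constructor
  · rintro ⟨i, c, rfl⟩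
    have : ∀ i c, ∃ a b a' b', ¬ (a = a' ∧ b = b') ∧ idx i a b = c ∧ idx i a' b' = c := by decide
    obtain ⟨a, b, a', b', hne, h1, h2⟩ := this i c
    exact ⟨a, b, a', b', hne, h.line_eq hne h1 h2⟩
  · rintro ⟨a, b, a', b', hne, rfl⟩
    have : ∀ a b a' b', ∃ i, idx i a b = idx i a' b' := by decide
    obtain ⟨i, hi⟩ := this a b a' b'
    exact ⟨i, _, (h.line_eq hne hi rfl).symm⟩

lemma map (h : Config L p) (g : (Fin 3 → ℂ) ≃ₗ[ℂ] (Fin 3 → ℂ)) :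
    Config (fun i c => (L i c).map g.toLinearMap) (fun a b => (p a b).map g.toLinearMap) := by
  refine ⟨fun i c => ?_, fun a b => ?_, fun i c a b => ?_⟩
  · rw [← h.ldim i c]
    exact LinearEquiv.finrank_map_eq g _
  · rw [← h.pdim a b]
    exact LinearEquiv.finrank_map_eq g _
  · rw [Submodule.map_le_map_iff_of_injective g.injective, h.inc]

lemma S_map (g : (Fin 3 → ℂ) ≃ₗ[ℂ] (Fin 3 → ℂ)) :
    Submodule.map g.toLinearMap '' S p = S (fun a b => (p a b).map g.toLinearMap) := by
  ext ℓ
  constructor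
  · rintro ⟨_, ⟨a, b, a', b', hne, rfl⟩, rfl⟩
    exact ⟨a, b, a', b', hne, Submodule.map_sup _ _ _⟩
  · rintro ⟨a, b, a', b', hne, rfl⟩
    exact ⟨_, ⟨a, b, a', b', hne, rfl⟩, Submodule.map_sup _ _ _⟩

lemma S_swap : S (fun a b => p b a) = S p := by
  ext ℓ
  constructor <;>
  · rintro ⟨a, b, a', b', hne, rfl⟩
    exact ⟨b, a, b', a', fun hh => hne hh.symm, rfl⟩

end Config
end HessianNet
namespace HessianNet

open Submodule

/-- Normal form for the nine points. -/
def Q (x : ℂ) : Fin 3 → Fin 3 → (Fin 3 → ℂ) :=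
  ![![![1, 0, 0], ![0, 0, 1], ![1, 0, 1 - x]],
    ![![0, 1, 0], ![1, 1, 1], ![1, x, 1]],
    ![![1, x, 0], ![1, 1, 1 - x], ![0, 1, 1]]]

lemma det_zero {W : Submodule ℂ (Fin 3 → ℂ)} (hW : Module.finrank ℂ W = 2)
    {u v w : Fin 3 → ℂ} (hu : u ∈ W) (hv : v ∈ W) (hw : w ∈ W) :
    u 0 * v 1 * w 2 - u 0 * v 2 * w 1 - u 1 * v 0 * w 2 + u 1 * v 2 * w 0
      + u 2 * v 0 * w 1 - u 2 * v 1 * w 0 = 0 := by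
  by_contra hd
  have hdet : (Matrix.of ![u, v, w]).det ≠ 0 := by
    rw [Matrix.det_fin_three]
    simpa using hd
  have hli : LinearIndependent ℂ (Matrix.of ![u, v, w]).row :=
    Matrix.linearIndependent_rows_iff_isUnit.2
      ((Matrix.isUnit_iff_isUnit_det _).2 (isUnit_iff_ne_zero.2 hdet))
  have hc := finrank_span_eq_card hli
  have hle : span ℂ (Set.range (Matrix.of ![u, v, w]).row) ≤ W := by
    rw [span_le]
    rintro _ ⟨i, rfl⟩
    fin_cases i
    · exact hu
    · exact hv
    · exact hw
  have := Submodule.finrank_mono hle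
  rw [hc, hW] at this
  simp at this

lemma exists_vec {p : Submodule ℂ (Fin 3 → ℂ)} (h : Module.finrank ℂ p = 1) :
    ∃ v : Fin 3 → ℂ, v ≠ 0 ∧ p = span ℂ {v} := by
  obtain ⟨v, hv, hs⟩ := finrank_eq_one_iff'.1 h
  refine ⟨v, by simpa using hv, le_antisymm (fun w hw => ?_) ?_⟩
  · obtain ⟨c, hc⟩ := hs ⟨w, hw⟩
    exact mem_span_singleton.2 ⟨c, by simpa using congrArg Subtype.val hc⟩
  · simp

lemma span_smul' {s : ℂ} (hs : s ≠ 0) {u v : Fin 3 → ℂ} (h : u = s • v) :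
    span ℂ {u} = span ℂ {v} := by
  rw [h]
  exact span_singleton_smul_eq (isUnit_iff_ne_zero.2 hs) v

namespace Config

variable {L : Fin 4 → Fin 3 → Submodule ℂ (Fin 3 → ℂ)}
    {p : Fin 3 → Fin 3 → Submodule ℂ (Fin 3 → ℂ)}

lemma step2 (h : Config L p) (h00 : p 0 0 = span ℂ {![1, 0, 0]}) (h10 : p 1 0 = span ℂ {![0, 1, 0]})
    (h01 : p 0 1 = span ℂ {![0, 0, 1]}) (h11 : p 1 1 = span ℂ {![1, 1, 1]}) :
    ∃ x : ℂ, x ^ 2 - x + 1 = 0 ∧ ∀ a b, p a b = span ℂ {Q x a b} := by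
  have mem : ∀ {a b v} i, p a b = span ℂ {v} → v ∈ L i (idx i a b) := fun {a b v} i hv =>
    (h.inc i _ a b).2 rfl (hv ▸ mem_span_singleton_self v)
  have ext3 : ∀ {u v : Fin 3 → ℂ}, u 0 = v 0 → u 1 = v 1 → u 2 = v 2 → u = v := by
    intro u v h0 h1 h2
    ext i
    fin_cases i <;> assumption
  obtain ⟨x, hx⟩ : ∃ x : ℂ, p 2 0 = span ℂ {![1, x, 0]} := by
    obtain ⟨v, hv, hp⟩ := exists_vec (h.pdim 2 0)
    have d := det_zero (h.ldim 1 0) (mem 1 h00) (mem 1 h10) (mem 1 hp)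
    simp at d
    have hs : v 0 ≠ 0 := by
      intro h0
      have h1 : v 1 ≠ 0 := fun h1 => hv (ext3 h0 h1 d)
      exact h.ne (a := 2) (b := 0) (a' := 1) (b' := 0) (by decide)
        (by rw [hp, h10]; exact span_smul' h1 (ext3 (by simp [h0]) (by simp) (by simp [d])))
    exact ⟨v 1 / v 0, by
      rw [hp]; exact span_smul' hs (ext3 (by simp) (by simp; field_simp) (by simp [d]))⟩
  obtain ⟨y, hy⟩ : ∃ y : ℂ, p 0 2 = span ℂ {![1, 0, y]} := by
    obtain ⟨v, hv, hp⟩ := exists_vec (h.pdim 0 2)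
    have d := det_zero (h.ldim 0 0) (mem 0 h00) (mem 0 h01) (mem 0 hp)
    simp at d
    have hs : v 0 ≠ 0 := by
      intro h0
      have h1 : v 2 ≠ 0 := fun h1 => hv (ext3 h0 d h1)
      exact h.ne (a := 0) (b := 2) (a' := 0) (b' := 1) (by decide)
        (by rw [hp, h01]; exact span_smul' h1 (ext3 (by simp [h0]) (by simp [d]) (by simp)))
    exact ⟨v 2 / v 0, by
      rw [hp]; exact span_smul' hs (ext3 (by simp) (by simp [d]) (by simp; field_simp))⟩
  obtain ⟨z, hz⟩ : ∃ z : ℂ, p 2 1 = span ℂ {![1, 1, z]} := by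
    obtain ⟨v, hv, hp⟩ := exists_vec (h.pdim 2 1)
    have d := det_zero (h.ldim 1 1) (mem 1 h01) (mem 1 h11) (mem 1 hp)
    simp at d
    have d' : v 1 = v 0 := by linear_combination d
    have hs : v 0 ≠ 0 := by
      intro h0
      have h1 : v 2 ≠ 0 := fun h1 => hv (ext3 h0 (d'.trans h0) h1)
      exact h.ne (a := 2) (b := 1) (a' := 0) (b' := 1) (by decide)
        (by rw [hp, h01]; exact span_smul' h1 (ext3 (by simp [h0]) (by simp [d', h0]) (by simp)))
    exact ⟨v 2 / v 0, by
      rw [hp]; exact span_smul' hs (ext3 (by simp) (by simp [d']) (by simp; field_simp))⟩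
  obtain ⟨w, hw⟩ : ∃ w : ℂ, p 1 2 = span ℂ {![1, w, 1]} := by
    obtain ⟨v, hv, hp⟩ := exists_vec (h.pdim 1 2)
    have d := det_zero (h.ldim 0 1) (mem 0 h10) (mem 0 h11) (mem 0 hp)
    simp at d
    have d' : v 2 = v 0 := by linear_combination -d
    have hs : v 0 ≠ 0 := by
      intro h0
      have h1 : v 1 ≠ 0 := fun h1 => hv (ext3 h0 h1 (d'.trans h0))
      exact h.ne (a := 1) (b := 2) (a' := 1) (b' := 0) (by decide)
        (by rw [hp, h10]; exact span_smul' h1 (ext3 (by simp [h0]) (by simp) (by simp [d', h0])))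
    exact ⟨v 1 / v 0, by
      rw [hp]; exact span_smul' hs (ext3 (by simp) (by simp; field_simp) (by simp [d']))⟩
  have h22 : p 2 2 = span ℂ {![0, 1, 1]} := by
    obtain ⟨v, hv, hp⟩ := exists_vec (h.pdim 2 2)
    have d := det_zero (h.ldim 2 1) (mem 2 h10) (mem 2 h01) (mem 2 hp)
    simp at d
    have d2 := det_zero (h.ldim 3 0) (mem 3 h00) (mem 3 h11) (mem 3 hp)
    simp at d2
    have d' : v 2 = v 1 := by linear_combination d2
    have hs : v 1 ≠ 0 := fun h1 => hv (ext3 d h1 (d'.trans h1))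
    rw [hp]
    exact span_smul' hs (ext3 (by simp [d]) (by simp) (by simp [d']))
  have e1 := det_zero (h.ldim 2 0) (mem 2 h00) (mem 2 hw) (mem 2 hz)
  have e2 := det_zero (h.ldim 3 1) (mem 3 h01) (mem 3 hw) (mem 3 hx)
  have e3 := det_zero (h.ldim 3 2) (mem 3 h10) (mem 3 hy) (mem 3 hz)
  have e4 := det_zero (h.ldim 0 2) (mem 0 hx) (mem 0 hz) (mem 0 h22)
  simp at e1 e2 e3 e4
  have hwx : w = x := by linear_combination -e2
  have hzx : z = 1 - x := by linear_combination -e4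
  have hyx : y = 1 - x := by linear_combination e3 + hzx
  subst hwx hzx hyx
  refine ⟨w, by linear_combination -e1, ?_⟩
  intro a b
  fin_cases a <;> fin_cases b <;> simpa [Q]

lemma step1 (h : Config L p) : ∃ g : (Fin 3 → ℂ) ≃ₗ[ℂ] (Fin 3 → ℂ),
    ∃ x : ℂ, x ^ 2 - x + 1 = 0 ∧ ∀ a b, (p a b).map g.toLinearMap = span ℂ {Q x a b} := by
  obtain ⟨u, hu, hpu⟩ := exists_vec (h.pdim 0 0)
  obtain ⟨v, hv, hpv⟩ := exists_vec (h.pdim 1 0)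
  obtain ⟨w, hw, hpw⟩ := exists_vec (h.pdim 0 1)
  obtain ⟨t, ht, hpt⟩ := exists_vec (h.pdim 1 1)
  have l1 := h.line_eq (a := 0) (b := 0) (a' := 1) (b' := 0) (i := 1) (c := 0)
    (by decide) rfl rfl
  have l2 := h.line_eq (a := 0) (b := 0) (a' := 0) (b' := 1) (i := 0) (c := 0)
    (by decide) rfl rfl
  have l3 := h.line_eq (a := 1) (b := 0) (a' := 0) (b' := 1) (i := 2) (c := 1)
    (by decide) rfl rfl
  have htop : p 0 0 ⊔ p 1 0 ⊔ p 0 1 = ⊤ := by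
    have hlt : L 1 0 < L 1 0 ⊔ p 0 1 := by
      refine lt_of_le_of_ne le_sup_left fun he => ?_
      have : p 0 1 ≤ L 1 0 := he ▸ le_sup_right
      rw [h.inc] at this
      exact absurd this (by decide)
    have h3 := Submodule.finrank_lt_finrank_of_lt hlt
    rw [h.ldim] at h3
    rw [← l1]
    apply Submodule.eq_top_of_finrank_eq
    have := Submodule.finrank_le (L 1 0 ⊔ p 0 1)
    simp at this ⊢
    omega
  have hrange : (Set.range ![u, v, w]) = {u, v, w} := by
    ext y
    simp [eq_comm]
    tauto
  have hsp : span ℂ (Set.range ![u, v, w]) = ⊤ := by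
    rw [hrange, ← htop, hpu, hpv, hpw, span_insert, span_insert, sup_assoc]
  have hli : LinearIndependent ℂ ![u, v, w] :=
    linearIndependent_of_top_le_span_of_card_eq_finrank hsp.ge (by simp)
  have htm : t ∈ span ℂ (Set.range ![u, v, w]) := hsp ▸ mem_top
  obtain ⟨c, hc⟩ := (mem_span_range_iff_exists_fun ℂ).1 htm
  simp [Fin.sum_univ_three] at hc
  have tn : ∀ i d, idx i 1 1 ≠ d → t ∉ L i d := by
    intro i d hne hm
    apply hne
    rw [← h.inc, hpt]
    simpa using hm
  have mu : u ∈ p 0 0 := hpu ▸ mem_span_singleton_self u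
  have mv : v ∈ p 1 0 := hpv ▸ mem_span_singleton_self v
  have mw : w ∈ p 0 1 := hpw ▸ mem_span_singleton_self w
  have c0 : c 0 ≠ 0 := by
    intro h0
    apply tn 2 1 (by decide)
    rw [l3, ← hc, h0, zero_smul, zero_add]
    exact add_mem (smul_mem _ _ (mem_sup_left mv)) (smul_mem _ _ (mem_sup_right mw))
  have c1 : c 1 ≠ 0 := by
    intro h0
    apply tn 0 0 (by decide)
    rw [l2, ← hc, h0, zero_smul, add_zero]
    exact add_mem (smul_mem _ _ (mem_sup_left mu)) (smul_mem _ _ (mem_sup_right mw))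
  have c2 : c 2 ≠ 0 := by
    intro h0
    apply tn 1 0 (by decide)
    rw [l1, ← hc, h0, zero_smul, add_zero]
    exact add_mem (smul_mem _ _ (mem_sup_left mu)) (smul_mem _ _ (mem_sup_right mv))
  let B : Module.Basis (Fin 3) ℂ (Fin 3 → ℂ) := Module.Basis.mk hli hsp.ge
  have hcu : ∀ i, IsUnit (c i) := by
    intro i
    rw [isUnit_iff_ne_zero]
    fin_cases i <;> assumption
  let B' := B.isUnitSMul hcu
  let g := B'.equivFun
  have gB : ∀ i, g (c i • B i) = Pi.single i 1 := by
    intro i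
    have := B'.equivFun_self i
    rw [Module.Basis.isUnitSMul_apply] at this
    funext j
    change B'.equivFun (c i • B i) j = _
    rw [this]
    simp [Pi.single_apply, eq_comm]
  have gu : g (c 0 • u) = ![1, 0, 0] := by
    have := gB 0
    rw [show B 0 = u by simp [B]] at this
    rw [this]; ext i; fin_cases i <;> simp
  have gv : g (c 1 • v) = ![0, 1, 0] := by
    have := gB 1
    rw [show B 1 = v by simp [B]] at this
    rw [this]; ext i; fin_cases i <;> simp
  have gw : g (c 2 • w) = ![0, 0, 1] := by
    have := gB 2
    rw [show B 2 = w by simp [B]] at this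
    rw [this]; ext i; fin_cases i <;> simp
  have gt : g t = ![1, 1, 1] := by
    rw [← hc, map_add, map_add, gu, gv, gw]
    simp
  have sm : ∀ {q : Submodule ℂ (Fin 3 → ℂ)} {s : ℂ} {a b : Fin 3 → ℂ}, s ≠ 0 →
      q = span ℂ {a} → g (s • a) = b → q.map g.toLinearMap = span ℂ {b} := by
    rintro q s a b hs rfl rfl
    rw [map_span, Set.image_singleton]
    exact (span_smul' hs (by simp)).symm
  refine ⟨g, (h.map g).step2 (sm c0 hpu gu) (sm c1 hpv gv) (sm c2 hpw gw)
    (sm one_ne_zero hpt (by rw [one_smul, gt]))⟩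

end Config

lemma normal_form {x₀ : ℂ} (h₀ : x₀ ^ 2 - x₀ + 1 = 0)
    {A : Fin 4 → Finset (Submodule ℂ (Fin 3 → ℂ))}
    {χ : Finset (Submodule ℂ (Fin 3 → ℂ))} (h : IsNet 4 3 A χ) :
    ∃ g : (Fin 3 → ℂ) ≃ₗ[ℂ] (Fin 3 → ℂ),
      Submodule.map g.toLinearMap '' (⋃ i, (A i : Set (Submodule ℂ (Fin 3 → ℂ)))) =
        Config.S (fun a b => span ℂ {Q x₀ a b}) := by
  obtain ⟨L, p, hC, hA⟩ := exists_config h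
  obtain ⟨g, x, hx, hg⟩ := hC.step1
  rw [hA, hC.lines_eq]
  have hgS : Submodule.map g.toLinearMap '' Config.S p = Config.S (fun a b => span ℂ {Q x a b}) := by
    rw [Config.S_map]
    simp only [hg]
  have hor : (x - x₀) * (x - (1 - x₀)) = 0 := by linear_combination hx - h₀
  rcases mul_eq_zero.1 hor with hh | hh
  · rw [sub_eq_zero.1 hh] at hgS
    exact ⟨g, hgS⟩
  · have hxx := sub_eq_zero.1 hh
    let s : (Fin 3 → ℂ) ≃ₗ[ℂ] (Fin 3 → ℂ) := LinearEquiv.funCongrLeft ℂ ℂ (Equiv.swap 1 2)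
    refine ⟨g.trans s, ?_⟩
    have : (fun S => Submodule.map (g.trans s).toLinearMap S) =
        fun S => Submodule.map s.toLinearMap (Submodule.map g.toLinearMap S) := by
      funext S
      rw [LinearEquiv.coe_trans, Submodule.map_comp]
    have e : Submodule.map (g.trans s).toLinearMap '' Config.S p =
        Submodule.map s.toLinearMap '' (Submodule.map g.toLinearMap '' Config.S p) := by
      rw [Set.image_image]
      exact congrArg (fun f => f '' Config.S p) this
    rw [e, hgS, Config.S_map, ← Config.S_swap]
    congr 1
    funext a b
    rw [map_span, Set.image_singleton]
    congr 2
    subst hxx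
    ext i
    fin_cases a <;> fin_cases b <;> fin_cases i <;>
      simp [s, Q, LinearEquiv.funCongrLeft_apply, LinearMap.funLeft_apply, Equiv.swap_apply_def]

/-- Coefficients of the twelve lines. -/
def N (x : ℂ) : Fin 4 → Fin 3 → (Fin 3 → ℂ) :=
  ![![![0, 1, 0], ![1, 0, -1], ![x, -1, 1]],
    ![![0, 0, 1], ![1, -1, 0], ![1 - x, 1, -1]],
    ![![0, 1, -x], ![1, 0, 0], ![1, x - 1, -x]],
    ![![0, 1, -1], ![x, -1, 0], ![1 - x, 0, -1]]]

lemma N_Q {x : ℂ} (hx : x ^ 2 - x + 1 = 0) (i c a b) :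
    N x i c 0 * Q x a b 0 + N x i c 1 * Q x a b 1 + N x i c 2 * Q x a b 2 = 0 ↔ idx i a b = c := by
  have h0 : x ≠ 0 := by rintro rfl; norm_num at hx
  have h1 : x ≠ 1 := by rintro rfl; norm_num at hx
  have h2 : x ≠ 2 := by rintro rfl; norm_num at hx
  have h3 : x ≠ -1 := by rintro rfl; norm_num at hx
  have h4 : 2 * x ≠ 1 := by
    intro h
    have : (3 : ℂ) = 0 := by linear_combination 4 * hx - (2 * x - 1) * h
    norm_num at this
  fin_cases i <;> fin_cases c <;> fin_cases a <;> fin_cases b <;>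
    simp [N, Q, idx] <;> grind

lemma net_exists {x : ℂ} (hx : x ^ 2 - x + 1 = 0) :
    ∃ (A : Fin 4 → Finset (Submodule ℂ (Fin 3 → ℂ)))
        (χ : Finset (Submodule ℂ (Fin 3 → ℂ))), IsNet 4 3 A χ := by
  classical
  let φ : Fin 4 → Fin 3 → ((Fin 3 → ℂ) →ₗ[ℂ] ℂ) := fun i c => Fintype.linearCombination ℂ (N x i c)
  let L : Fin 4 → Fin 3 → Submodule ℂ (Fin 3 → ℂ) := fun i c => LinearMap.ker (φ i c)
  let p : Fin 3 → Fin 3 → Submodule ℂ (Fin 3 → ℂ) := fun a b => span ℂ {Q x a b}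
  have φQ : ∀ i c a b, φ i c (Q x a b) = 0 ↔ idx i a b = c := by
    intro i c a b
    rw [← N_Q hx i c a b]
    simp [φ, Fintype.linearCombination_apply, Fin.sum_univ_three, mul_comm]
  have inc : ∀ i c a b, p a b ≤ L i c ↔ idx i a b = c := by
    intro i c a b
    rw [← φQ]
    simp [p, L]
  have ldim : ∀ i c, Module.finrank ℂ (L i c) = 2 := by
    intro i c
    have hne : ∃ a b, idx i a b ≠ c := by revert i c; decide
    obtain ⟨a, b, hab⟩ := hne
    have hφ : φ i c ≠ 0 := by
      intro h0
      apply hab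
      rw [← φQ, h0, LinearMap.zero_apply]
    have := Module.Dual.finrank_ker_add_one_of_ne_zero hφ
    simp at this
    exact this
  have pdim : ∀ a b, Module.finrank ℂ (p a b) = 1 := by
    intro a b
    apply finrank_span_singleton
    intro h0
    have := φQ 0 (a + 1) a b
    rw [h0, map_zero] at this
    have h1 := this.1 rfl
    revert h1
    simp [idx]
  have hC : Config L p := ⟨ldim, pdim, inc⟩
  have onl : ∀ i c, ∃ a b, idx i a b = c := by decide
  have two : ∀ i j c d, i ≠ j → ∃ a b, idx i a b = c ∧ idx j a b = d := by decide
  have Linj : ∀ i c d, L i c = L i d → c = d := by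
    intro i c d hh
    obtain ⟨a, b, hab⟩ := onl i c
    have h1 := (inc i c a b).2 hab
    rw [hh, inc] at h1
    exact hab.symm.trans h1
  have Lne : ∀ i j c d, i ≠ j → L i c ≠ L j d := by
    intro i j c d hij hh
    obtain ⟨a, b, h1, h2⟩ := two i j c (d + 1) hij
    have h3 := (inc i c a b).2 h1
    rw [hh, inc, h2] at h3
    simp at h3
  refine ⟨fun i => Finset.univ.image (L i),
    Finset.univ.image (fun u : Fin 3 × Fin 3 => p u.1 u.2), by norm_num, ?_, ?_, ?_, ?_, ?_, ?_⟩
  · intro i ℓ hl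
    simp only [Finset.mem_image, Finset.mem_univ, true_and] at hl
    obtain ⟨c, rfl⟩ := hl
    exact ldim i c
  · intro ℓ hl
    simp only [Finset.mem_image, Finset.mem_univ, true_and] at hl
    obtain ⟨c, rfl⟩ := hl
    exact pdim _ _
  · intro i
    rw [Finset.card_image_of_injective _ (fun c d => Linj i c d)]
    simp
  · intro i j hij
    rw [Finset.disjoint_left]
    intro ℓ h1 h2
    simp only [Finset.mem_image, Finset.mem_univ, true_and] at h1 h2
    obtain ⟨c, rfl⟩ := h1
    obtain ⟨d, hd⟩ := h2
    exact Lne _ _ _ _ hij hd.symm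
  · intro i j hij ℓ₁ h1 ℓ₂ h2
    simp only [Finset.mem_image, Finset.mem_univ, true_and] at h1 h2
    obtain ⟨c, rfl⟩ := h1
    obtain ⟨d, rfl⟩ := h2
    refine ⟨Lne _ _ _ _ hij, ?_⟩
    obtain ⟨a, b, h1, h2⟩ := two i j c d hij
    simp only [Finset.mem_image, Finset.mem_univ, true_and]
    refine ⟨(a, b), ?_⟩
    apply Submodule.eq_of_le_of_finrank_le (le_inf ((inc _ _ _ _).2 h1) ((inc _ _ _ _).2 h2))
    rw [pdim]
    by_contra hlt
    have e1 : L i c ⊓ L j d = L i c :=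
      Submodule.eq_of_le_of_finrank_le inf_le_left (by rw [ldim]; omega)
    have e2 : L i c ⊓ L j d = L j d :=
      Submodule.eq_of_le_of_finrank_le inf_le_right (by rw [ldim]; omega)
    exact Lne _ _ _ _ hij (e1.symm.trans e2)
  · intro ℓ hl i
    simp only [Finset.mem_image, Finset.mem_univ, true_and] at hl
    obtain ⟨⟨a, b⟩, rfl⟩ := hl
    refine ⟨L i (idx i a b), ⟨by simp, (inc _ _ _ _).2 rfl⟩, ?_⟩
    rintro ℓ ⟨hl, hle⟩
    simp only [Finset.mem_image, Finset.mem_univ, true_and] at hl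
    obtain ⟨c, rfl⟩ := hl
    rw [(inc _ _ _ _).1 hle]

lemma exists_root : ∃ x : ℂ, x ^ 2 - x + 1 = 0 := by
  obtain ⟨s, hs⟩ := IsAlgClosed.exists_pow_nat_eq (-3 : ℂ) (n := 2) (by norm_num)
  exact ⟨(1 + s) / 2, by linear_combination hs / 4⟩

end HessianNet

/-- There exists a `(4,3)`-net in `ℂℙ²` (the Hessian configuration), and it is
unique up to projective isomorphism: for any two `(4,3)`-nets there is a linear
automorphism `g` of `ℂ³` whose induced action on subspaces maps the set of
lines of the first net bijectively onto the set of lines of the second. -/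
theorem net_4_3_exists_and_unique :
    (∃ (A : Fin 4 → Finset (Submodule ℂ (Fin 3 → ℂ)))
        (χ : Finset (Submodule ℂ (Fin 3 → ℂ))), IsNet 4 3 A χ) ∧
    ∀ (A A' : Fin 4 → Finset (Submodule ℂ (Fin 3 → ℂ)))
      (χ χ' : Finset (Submodule ℂ (Fin 3 → ℂ))),
      IsNet 4 3 A χ → IsNet 4 3 A' χ' →
      ∃ g : (Fin 3 → ℂ) ≃ₗ[ℂ] (Fin 3 → ℂ),
        Set.BijOn (Submodule.map g.toLinearMap)
          (⋃ i, (A i : Set (Submodule ℂ (Fin 3 → ℂ))))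
          (⋃ i, (A' i : Set (Submodule ℂ (Fin 3 → ℂ)))) := by
  obtain ⟨x, hx⟩ := HessianNet.exists_root
  refine ⟨HessianNet.net_exists hx, fun A A' χ χ' h h' => ?_⟩
  obtain ⟨g, hg⟩ := HessianNet.normal_form hx h
  obtain ⟨g', hg'⟩ := HessianNet.normal_form hx h'
  refine ⟨g.trans g'.symm, ?_⟩
  have inj : Function.Injective (Submodule.map (g.trans g'.symm).toLinearMap) :=
    Submodule.map_injective_of_injective (g.trans g'.symm).injective
  have e : (⋃ i, (A' i : Set (Submodule ℂ (Fin 3 → ℂ)))) =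
      Submodule.map (g.trans g'.symm).toLinearMap ''
        (⋃ i, (A i : Set (Submodule ℂ (Fin 3 → ℂ)))) := by
    have e1 : (⋃ i, (A' i : Set (Submodule ℂ (Fin 3 → ℂ)))) =
        Submodule.map g'.symm.toLinearMap '' (Submodule.map g'.toLinearMap ''
          (⋃ i, (A' i : Set (Submodule ℂ (Fin 3 → ℂ))))) := by
      rw [Set.image_image]
      simp [← Submodule.map_comp]
    rw [e1, hg', ← hg, Set.image_image]
    refine Set.image_congr' fun S => ?_
    rw [LinearEquiv.coe_trans, Submodule.map_comp]
  rw [e]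
  exact inj.injOn.bijOn_image
end
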